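/- Let G be a graph with a minimal 3-edge-cutset L separating G into parts G' and G'', and let G₁ = G/G'' and G₂ = G/G' be the graphs obtained by contracting each side of the cutset to a single vertex. Then the flow polynomials satisfy F(G;λ)·(λ-1)·(λ-2) = F(G₁;λ)·F(G₂;λ). -/

import Mathlib

/-!
Both sides are polynomials over `ℤ`, so it suffices to compare their values at primes, i.e. at the
orders `q` of finite fields `K`. There the subset expansion is inclusion–exclusion over supports:
the cycle space of the spanning subgraph `S` has dimension `|S| - |V| + c(S)`
(`card_flows_supported`), so the flow polynomial counts nowhere-zero `K`-flows (`eval_flowPoly`).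

Sort flows by their values `x` on the three cut edges. A nowhere-zero flow of `G` is a choice of
`x` together with an extension of `x` into each side (`flowCount_cut`), while a nowhere-zero flow of
a contraction is `x` with an extension into one side (`flowCount_contract`). An extension exists
only if the net amount that `x` carries across the cut is zero, and there are `(q - 1)(q - 2)` such
nowhere-zero `x` (`card_balanced`).

The main point is that the number of extensions into a side is the same for all balanced `x`
(`exists_flowCount_const`). By inclusion–exclusion only the sets `S` of side edges on which the
demand of `x` can be met matter. Demands are met iff they sum to zero on each component of `S`, and
three nonzero values with sum zero have no proper nonempty subset with sum zero, so this happens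
exactly when `S` joins all three ends of the cut (`cutDemand_orthogonal_iff`). With `m` and `n`
extensions into the two sides and `N = (q - 1)(q - 2)`, the identity becomes
`(N m n) N = (N m) (N n)`.
-/

open Finset Polynomial

section Multigraph

variable {V E : Type} [Fintype V] [DecidableEq V] [Fintype E] [DecidableEq E]

/-- The adjacency relation induced on `V` by the edges in `S` of the multigraph with
edge-endpoint maps `fst, snd`. -/
def mgRel (fst snd : E → V) (S : Finset E) (v w : V) : Prop :=
  ∃ e ∈ S, (fst e = v ∧ snd e = w) ∨ (fst e = w ∧ snd e = v)

/-- The number of connected components of the spanning subgraph of the multigraph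
`(V, E)` with edge set `S`. -/
noncomputable def compCount (fst snd : E → V) (S : Finset E) : ℕ :=
  Nat.card (SimpleGraph.fromRel (mgRel fst snd S)).ConnectedComponent

/-- The flow polynomial of a multigraph, via the subset expansion
`F(G;λ) = Σ_{S ⊆ E} (-1)^{|E|-|S|} λ^{|S| - |V| + c(S)}`. -/
noncomputable def flowPoly (fst snd : E → V) : Polynomial ℤ :=
  ∑ S : Finset E,
    C ((-1 : ℤ) ^ (Fintype.card E - S.card)) * X ^ (S.card + compCount fst snd S - Fintype.card V)

/-- The degree of a vertex in a multigraph (loops count twice). -/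
def mgDeg (fst snd : E → V) (v : V) : ℕ :=
  (Finset.univ.filter fun e => fst e = v).card + (Finset.univ.filter fun e => snd e = v).card

/-- A multigraph is connected if the simple graph of its adjacency relation is connected. -/
def mgConnected (fst snd : E → V) : Prop :=
  (SimpleGraph.fromRel (mgRel fst snd Finset.univ)).Connected

/-- A multigraph is bridgeless if deleting any one edge leaves the number of connected
components unchanged. -/
def mgBridgeless (fst snd : E → V) : Prop :=
  ∀ e : E, compCount fst snd (Finset.univ.erase e) = compCount fst snd Finset.univ

end Multigraph

section Contract

variable {V E : Type} [Fintype V] [DecidableEq V] [Fintype E] [DecidableEq E]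

/-- The vertex map that keeps the vertices in `A` and contracts all the vertices
outside `A` to a single new vertex. -/
def contractMap (A : Finset V) (v : V) : {x : V // x ∈ A} ⊕ Unit :=
  if h : v ∈ A then Sum.inl ⟨v, h⟩ else Sum.inr ()

/-- The edges surviving the contraction of the complement of `A`: those with at least
one endpoint in `A`. -/
def contractEdges (fst snd : E → V) (A : Finset V) : Type :=
  {e : E // fst e ∈ A ∨ snd e ∈ A}

instance (fst snd : E → V) (A : Finset V) : Fintype (contractEdges fst snd A) := by
  unfold contractEdges; infer_instance
instance (fst snd : E → V) (A : Finset V) : DecidableEq (contractEdges fst snd A) := by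
  unfold contractEdges; infer_instance

/-- First endpoint map of the graph obtained by contracting the complement of `A` to a
single vertex. -/
def contractFst (fst snd : E → V) (A : Finset V) (e : contractEdges fst snd A) :
    {x : V // x ∈ A} ⊕ Unit := contractMap A (fst e.1)

/-- Second endpoint map of the graph obtained by contracting the complement of `A` to a
single vertex. -/
def contractSnd (fst snd : E → V) (A : Finset V) (e : contractEdges fst snd A) :
    {x : V // x ∈ A} ⊕ Unit := contractMap A (snd e.1)

/-- Connectivity of the subgraph induced on the vertex set `A`. -/
def sideConnected (fst snd : E → V) (A : Finset V) : Prop :=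
  (SimpleGraph.fromRel (fun v w : {x : V // x ∈ A} =>
    ∃ e : E, (fst e = ↑v ∧ snd e = ↑w) ∨ (fst e = ↑w ∧ snd e = ↑v))).Connected

end Contract

section Flows

set_option linter.unusedSectionVars false

variable {V E : Type} [Fintype V] [DecidableEq V] [Fintype E] [DecidableEq E]
variable {K : Type} [Field K] [Fintype K] [DecidableEq K]

/-! ### Boundary maps and cycle spaces -/

/-- The signed incidence matrix of a multigraph; the column of a loop is zero. -/
def incid (K : Type) [Field K] (fst snd : E → V) : Matrix V E K :=
  Matrix.of fun v e => (if snd e = v then 1 else 0) - (if fst e = v then 1 else 0)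

/-- The boundary map of a multigraph: a function on the edges is sent to its net inflow at each
vertex. -/
def bdry (fst snd : E → V) : (E → K) →ₗ[K] (V → K) := (incid K fst snd).mulVecLin

theorem bdry_apply (fst snd : E → V) (g : E → K) (v : V) :
    bdry fst snd g v =
      ∑ e, ((if snd e = v then 1 else 0) - (if fst e = v then 1 else 0)) * g e := by
  simp [bdry, incid, Matrix.mulVec, dotProduct]

/-- Summation by parts: the boundary map is adjoint to the coboundary of potentials. -/
theorem sum_mul_bdry (fst snd : E → V) (g : E → K) (φ : V → K) :
    ∑ v, φ v * bdry fst snd g v = ∑ e, g e * (φ (snd e) - φ (fst e)) := by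
  simp only [bdry_apply, Finset.mul_sum]
  rw [Finset.sum_comm]
  refine Finset.sum_congr rfl fun e _ => ?_
  have : ∀ v, φ v * (((if snd e = v then (1:K) else 0) - (if fst e = v then 1 else 0)) * g e)
      = g e * ((if snd e = v then φ v else 0) - (if fst e = v then φ v else 0)) := by
    intro v; split_ifs <;> ring
  simp [this, ← Finset.mul_sum, Finset.sum_sub_distrib]

/-- The potentials that are constant along the edges in `S` are the functions on the set of
components of the spanning subgraph with edge set `S`. -/
theorem finrank_ker_transpose (fst snd : E → V) (S : Finset E) :
    Module.finrank K (LinearMap.ker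
      ((incid K (fun e : S => fst e) (fun e : S => snd e)).transpose.mulVecLin)) =
      compCount fst snd S := by
  classical
  set G := SimpleGraph.fromRel (mgRel fst snd S)
  have hinj : Function.Injective
      (LinearMap.funLeft K K (G.connectedComponentMk)) :=
    LinearMap.funLeft_injective_of_surjective _ _ _ Quot.mk_surjective
  have hker : ∀ φ : V → K, φ ∈ LinearMap.ker
      ((incid K (fun e : S => fst e) (fun e : S => snd e)).transpose.mulVecLin) ↔
      ∀ e ∈ S, φ (fst e) = φ (snd e) := by
    intro φ
    rw [LinearMap.mem_ker, funext_iff]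
    simp only [Matrix.mulVecLin_apply, Matrix.mulVec_transpose, Matrix.vecMul, dotProduct, incid,
      Matrix.of_apply, mul_sub, Finset.sum_sub_distrib, mul_ite, mul_one, mul_zero,
      Finset.sum_ite_eq, Finset.mem_univ, if_true, Pi.zero_apply, sub_eq_zero, Subtype.forall]
    exact forall₂_congr fun e _ => eq_comm
  have hrange : LinearMap.ker
      ((incid K (fun e : S => fst e) (fun e : S => snd e)).transpose.mulVecLin) =
      LinearMap.range (LinearMap.funLeft K K (G.connectedComponentMk)) := by
    ext φ
    rw [hker, LinearMap.mem_range]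
    constructor
    · intro h
      have hadj : ∀ v w, G.Adj v w → φ v = φ w := by
        intro v w hvw
        rcases hvw with ⟨-, ⟨e, he, ⟨rfl, rfl⟩ | ⟨rfl, rfl⟩⟩ | ⟨e, he, ⟨rfl, rfl⟩ | ⟨rfl, rfl⟩⟩⟩ <;>
          simp [h e he]
      have hwalk : ∀ v w, G.Walk v w → φ v = φ w := by
        intro v w p
        induction p with
        | nil => rfl
        | cons h p ih => exact (hadj _ _ h).trans ih
      exact ⟨SimpleGraph.ConnectedComponent.lift φ (fun v w p _ => hwalk v w p), by
        ext v; simp [LinearMap.funLeft]⟩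
    · rintro ⟨ψ, rfl⟩ e he
      simp only [LinearMap.funLeft_apply]
      by_cases hne : fst e = snd e
      · rw [hne]
      · congr 1
        exact SimpleGraph.ConnectedComponent.sound
          (SimpleGraph.Adj.reachable ⟨hne, Or.inl ⟨e, he, Or.inl ⟨rfl, rfl⟩⟩⟩)
  rw [hrange, LinearMap.finrank_range_of_inj hinj]
  simp [compCount, G, Nat.card_eq_fintype_card]

/-- The cycle space of the spanning subgraph with edge set `S` has dimension
`|S| - |V| + c(S)`; this is rank–nullity together with the equality of row and column rank. -/
theorem card_flows_supported (fst snd : E → V) (S : Finset E) :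
    (univ.filter fun g : E → K => (∀ e, e ∉ S → g e = 0) ∧ bdry fst snd g = 0).card =
      Fintype.card K ^ (S.card + compCount fst snd S - Fintype.card V) := by
  classical
  set M := incid K (fun e : S => fst e) (fun e : S => snd e) with hM
  have h1 := LinearMap.finrank_range_add_finrank_ker M.mulVecLin
  have h2 := LinearMap.finrank_range_add_finrank_ker M.transpose.mulVecLin
  have h3 : M.transpose.rank = M.rank := Matrix.rank_transpose M
  have h4 := finrank_ker_transpose (K := K) fst snd S
  rw [← hM] at h4
  simp only [Matrix.rank] at h3
  simp only [Module.finrank_fintype_fun_eq_card, Fintype.card_coe] at h1 h2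
  have h5 : Module.finrank K (LinearMap.ker M.mulVecLin) =
      S.card + compCount fst snd S - Fintype.card V := by omega
  rw [← h5, ← Module.card_eq_pow_finrank, ← Fintype.card_subtype]
  have hext : ∀ g : E → K, (∀ e, e ∉ S → g e = 0) →
      M.mulVecLin (fun e : S => g e) = bdry fst snd g := by
    intro g hg
    ext v
    rw [bdry_apply, ← Finset.sum_subset (Finset.subset_univ S), ← Finset.sum_coe_sort]
    · simp [hM, incid, Matrix.mulVec, dotProduct]
    · intro e _ he
      simp [hg e he]
  refine Fintype.card_congr
    { toFun := fun g => ⟨fun e => g.1 e, by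
        rw [LinearMap.mem_ker, hext _ g.2.1, g.2.2]⟩
      invFun := fun h => ⟨fun e => if he : e ∈ S then h.1 ⟨e, he⟩ else 0, ?_, ?_⟩
      left_inv := ?_
      right_inv := ?_ }
  · intro e he; simp [he]
  · rw [← hext _ (fun e he => by simp [he])]
    have := h.2
    rw [LinearMap.mem_ker] at this
    rw [← this]
    congr 1
    ext e; simp
  · intro g
    ext e
    by_cases he : e ∈ S
    · simp [he]
    · simp [he, g.2.1 e he]
  · intro h
    ext e
    simp

/-- Fredholm alternative for the boundary map: a demand `b` is met by a function supported on `S`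
iff it is orthogonal to every potential that is constant along the edges in `S`. -/
theorem exists_bdry_eq_iff (fst snd : E → V) (S : Finset E) (b : V → K) :
    (∃ g : E → K, (∀ e, e ∉ S → g e = 0) ∧ bdry fst snd g = b) ↔
      ∀ φ : V → K, (∀ e ∈ S, φ (fst e) = φ (snd e)) → ∑ v, φ v * b v = 0 := by
  constructor
  · rintro ⟨g, hg, rfl⟩ φ hφ
    rw [sum_mul_bdry]
    refine Finset.sum_eq_zero fun e _ => ?_
    by_cases he : e ∈ S
    · simp [hφ e he]
    · simp [hg e he]
  · intro h
    let P : Submodule K (E → K) :=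
      { carrier := {g | ∀ e, e ∉ S → g e = 0}
        add_mem' := fun {a c} ha hc e he => by simp [ha e he, hc e he]
        zero_mem' := fun e _ => rfl
        smul_mem' := fun c a ha e he => by simp [ha e he] }
    by_contra hcon
    have hb : b ∉ P.map (bdry fst snd) := by
      rintro ⟨g, hg, hgb⟩
      exact hcon ⟨g, hg, hgb⟩
    obtain ⟨f, hfb, hf⟩ := Submodule.exists_le_ker_of_notMem hb
    have hfsum : ∀ c : V → K, f c = ∑ v, f (Pi.single v 1) * c v := by
      intro c
      conv_lhs => rw [pi_eq_sum_univ' c]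
      simp [map_sum, mul_comm]
    apply hfb
    rw [hfsum]
    refine h (fun v => f (Pi.single v 1)) fun e he => ?_
    have hmem : bdry fst snd (Pi.single e (1 : K)) ∈ P.map (bdry fst snd) := by
      refine ⟨_, ?_, rfl⟩
      intro e' he'
      have : e' ≠ e := fun h => he' (h ▸ he)
      simp [this]
    have h0 := hf hmem
    rw [LinearMap.mem_ker, hfsum, sum_mul_bdry] at h0
    simp [Pi.single_apply] at h0
    exact (sub_eq_zero.mp h0).symm

/-! ### Counting flows by inclusion–exclusion -/

/-- The number of functions with support exactly `T` and boundary `b`. -/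
def flowCount (fst snd : E → V) (T : Finset E) (b : V → K) : ℕ :=
  (univ.filter fun g : E → K => (∀ e, g e ≠ 0 ↔ e ∈ T) ∧ bdry fst snd g = b).card

theorem sum_neg_one_pow_ite (T : Finset E) (g : E → K) :
    (∑ S ∈ T.powerset, (-1 : ℤ) ^ (T.card - S.card) * (if ∀ e, e ∉ S → g e = 0 then 1 else 0)) =
      if ∀ e, g e ≠ 0 ↔ e ∈ T then 1 else 0 := by
  classical
  by_cases hT : ∀ e, e ∉ T → g e = 0
  · have h := Finset.prod_add (fun _ : E => (1 : ℤ)) (fun e => if g e = 0 then -1 else 0) T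
    have hl : ∏ e ∈ T, ((1 : ℤ) + (if g e = 0 then -1 else 0)) =
        if ∀ e, g e ≠ 0 ↔ e ∈ T then 1 else 0 := by
      split_ifs with hg
      · refine Finset.prod_eq_one fun e he => ?_
        simp [(hg e).2 he]
      · push Not at hg
        obtain ⟨e, ⟨h1, h2⟩ | ⟨h1, h2⟩⟩ := hg
        · exact absurd (hT e h2) h1
        · exact Finset.prod_eq_zero h2 (by simp [h1])
    rw [← hl, h]
    refine Finset.sum_congr rfl fun S hS => ?_
    rw [Finset.mem_powerset] at hS
    rw [Finset.prod_const_one, one_mul]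
    split_ifs with hg
    · rw [Finset.prod_congr rfl (g := fun _ => (-1 : ℤ)), Finset.prod_const,
        Finset.card_sdiff_of_subset hS, mul_one]
      intro e he
      simp [hg e (Finset.mem_sdiff.1 he).2]
    · push Not at hg
      obtain ⟨e, he, hne⟩ := hg
      have : e ∈ T := by by_contra h'; exact hne (hT e h')
      rw [mul_zero, Finset.prod_eq_zero (Finset.mem_sdiff.2 ⟨this, he⟩)]
      simp [hne]
  · rw [if_neg (fun h => hT fun e he => by by_contra h'; exact he ((h e).1 h'))]
    refine Finset.sum_eq_zero fun S hS => ?_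
    rw [Finset.mem_powerset] at hS
    rw [if_neg (fun h => hT fun e he => h e fun h' => he (hS h')), mul_zero]

/-- Inclusion–exclusion over the support. -/
theorem flowCount_eq_sum (fst snd : E → V) (T : Finset E) (b : V → K) :
    (flowCount fst snd T b : ℤ) = ∑ S ∈ T.powerset, (-1 : ℤ) ^ (T.card - S.card) *
      ((univ.filter fun g : E → K => (∀ e, e ∉ S → g e = 0) ∧ bdry fst snd g = b).card : ℤ) := by
  classical
  have hc : ∀ P : (E → K) → Prop, ∀ [DecidablePred P],
      ((univ.filter fun g : E → K => P g ∧ bdry fst snd g = b).card : ℤ) =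
      ∑ g ∈ univ.filter (fun g : E → K => bdry fst snd g = b), if P g then 1 else 0 := by
    intro P _
    rw [Finset.sum_boole, Finset.filter_filter]
    congr 3
    ext g; exact and_comm
  rw [flowCount, hc]
  simp_rw [hc, Finset.mul_sum]
  rw [Finset.sum_comm]
  refine Finset.sum_congr rfl fun g _ => ?_
  exact (sum_neg_one_pow_ite T g).symm

/-- At the order of a finite field, the flow polynomial counts nowhere-zero flows over it. -/
theorem eval_flowPoly (fst snd : E → V) :
    (flowPoly fst snd).eval (Fintype.card K : ℤ) =
      flowCount fst snd univ (0 : V → K) := by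
  rw [flowCount_eq_sum, flowPoly, Polynomial.eval_finsetSum, Finset.powerset_univ]
  refine Finset.sum_congr rfl fun S _ => ?_
  rw [card_flows_supported]
  simp

/-- Two demands that are orthogonal to the same spaces of locally constant potentials admit
equally many functions with support exactly `T`: for each `S ⊆ T`, the solutions supported on `S`
form a coset of the cycle space of `S` or do not exist. -/
theorem flowCount_congr (fst snd : E → V) (T : Finset E) (b c : V → K)
    (h : ∀ S : Finset E, (∀ φ : V → K, (∀ e ∈ S, φ (fst e) = φ (snd e)) → ∑ v, φ v * b v = 0) ↔
      (∀ φ : V → K, (∀ e ∈ S, φ (fst e) = φ (snd e)) → ∑ v, φ v * c v = 0)) :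
    flowCount fst snd T b = flowCount fst snd T c := by
  classical
  have key : ∀ S : Finset E,
      (univ.filter fun g : E → K => (∀ e, e ∉ S → g e = 0) ∧ bdry fst snd g = b).card =
      (univ.filter fun g : E → K => (∀ e, e ∉ S → g e = 0) ∧ bdry fst snd g = c).card := by
    intro S
    have hS := h S
    rw [← exists_bdry_eq_iff, ← exists_bdry_eq_iff] at hS
    by_cases hb : ∃ g : E → K, (∀ e, e ∉ S → g e = 0) ∧ bdry fst snd g = b
    · obtain ⟨g₁, hg₁, hb₁⟩ := hb
      obtain ⟨g₂, hg₂, hb₂⟩ := hS.1 ⟨g₁, hg₁, hb₁⟩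
      refine Finset.card_bij' (fun g _ => g - g₁ + g₂) (fun g _ => g - g₂ + g₁) ?_ ?_ ?_ ?_
      · intro g hg
        simp only [Finset.mem_filter, Finset.mem_univ, true_and] at hg ⊢
        refine ⟨fun e he => by simp [hg.1 e he, hg₁ e he, hg₂ e he], ?_⟩
        simp [hg.2, hb₁, hb₂]
      · intro g hg
        simp only [Finset.mem_filter, Finset.mem_univ, true_and] at hg ⊢
        refine ⟨fun e he => by simp [hg.1 e he, hg₁ e he, hg₂ e he], ?_⟩
        simp [hg.2, hb₁, hb₂]
      · intro g _; abel
      · intro g _; abel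
    · have hc := fun hc => hb (hS.2 hc)
      rw [Finset.filter_false_of_mem (fun g _ hg => hb ⟨g, hg⟩),
        Finset.filter_false_of_mem (fun g _ hg => hc ⟨g, hg⟩)]
  have := flowCount_eq_sum fst snd T b
  simp_rw [key] at this
  rw [← flowCount_eq_sum] at this
  exact_mod_cast this

/-! ### Cutting a flow along the edge cut -/

theorem bdry_eq_zero_of_local (fst snd : E → V) (g : E → K) (v : V)
    (h : ∀ e, fst e = v ∨ snd e = v → g e = 0) : bdry fst snd g v = 0 := by
  rw [bdry_apply]
  refine Finset.sum_eq_zero fun e _ => ?_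
  by_cases h1 : fst e = v
  · simp [h e (Or.inl h1)]
  · by_cases h2 : snd e = v
    · simp [h e (Or.inr h2)]
    · simp [h1, h2]

theorem sum_bdry_univ (fst snd : E → V) (g : E → K) : ∑ v, bdry fst snd g v = 0 := by
  simpa using sum_mul_bdry fst snd g (fun _ => 1)

/-- The edges with both endpoints in `A`. -/
def innerEdges (fst snd : E → V) (A : Finset V) : Finset E :=
  univ.filter fun e => fst e ∈ A ∧ snd e ∈ A

/-- The demand on `A` that balances prescribed values `x` on the cut edges. -/
def cutDemand (fst snd : E → V) (A : Finset V) (x : E → K) (v : V) : K :=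
  if v ∈ A then -bdry fst snd x v else 0

/-- The functions whose support is exactly `L`. -/
def exactSupp (K : Type) [Field K] [Fintype K] [DecidableEq K] (L : Finset E) : Finset (E → K) :=
  univ.filter fun x => ∀ e, x e ≠ 0 ↔ e ∈ L

/-- Restriction of an edge function to `T`, extended by zero. -/
def restr (T : Finset E) (f : E → K) (e : E) : K := if e ∈ T then f e else 0

theorem bdry_eq_cutDemand_iff (fst snd : E → V) (A : Finset V) (g x : E → K)
    (hg : ∀ e, e ∉ innerEdges fst snd A → g e = 0) :
    bdry fst snd g = cutDemand fst snd A x ↔ ∀ v ∈ A, bdry fst snd (g + x) v = 0 := by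
  rw [funext_iff]
  refine forall_congr' fun v => ?_
  by_cases hv : v ∈ A
  · simp [cutDemand, hv, eq_neg_iff_add_eq_zero]
  · simp only [cutDemand, hv, if_false, false_imp_iff, iff_true]
    refine bdry_eq_zero_of_local _ _ _ _ fun e he => hg e fun h => hv ?_
    simp only [innerEdges, Finset.mem_filter, Finset.mem_univ, true_and] at h
    rcases he with rfl | rfl
    exacts [h.1, h.2]

/-- A function on the edges of the contraction is a flow iff its extension by zero is conserved
at the vertices of `A`: conservation at the contracted vertex follows. -/
theorem bdry_contract_eq_zero_iff (fst snd : E → V) (A : Finset V) (f : E → K)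
    (hf : ∀ e, f e ≠ 0 → fst e ∈ A ∨ snd e ∈ A) :
    bdry (contractFst fst snd A) (contractSnd fst snd A)
      (fun e : contractEdges fst snd A => f e.1) = 0 ↔ ∀ v ∈ A, bdry fst snd f v = 0 := by
  have hinl : ∀ v (hv : v ∈ A), bdry (contractFst fst snd A) (contractSnd fst snd A)
      (fun e : contractEdges fst snd A => f e.1) (Sum.inl ⟨v, hv⟩) = bdry fst snd f v := by
    intro v hv
    have hmap : ∀ w, contractMap A w = Sum.inl ⟨v, hv⟩ ↔ w = v := by
      intro w
      unfold contractMap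
      split_ifs with h
      · simp
      · simp only [false_iff]
        rintro rfl
        exact h hv
    simp only [bdry_apply, contractFst, contractSnd, hmap]
    rw [← Finset.sum_subset (Finset.subset_univ (univ.filter fun e => fst e ∈ A ∨ snd e ∈ A))]
    · exact (Finset.sum_subtype (p := fun e => fst e ∈ A ∨ snd e ∈ A) _ (by simp)
        (fun e => ((if snd e = v then 1 else 0) - (if fst e = v then 1 else 0)) * f e)).symm
    · intro e _ he
      have : f e = 0 := by
        by_contra h
        exact he (by simpa using hf e h)
      simp [this]
  constructor
  · intro h v hv
    rw [← hinl v hv, h]; rfl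
  · intro h
    have hz : ∀ w : {x // x ∈ A}, bdry (contractFst fst snd A) (contractSnd fst snd A)
        (fun e : contractEdges fst snd A => f e.1) (Sum.inl w) = 0 := by
      rintro ⟨v, hv⟩
      rw [hinl v hv, h v hv]
    have hs := sum_bdry_univ (contractFst fst snd A) (contractSnd fst snd A)
      (fun e : contractEdges fst snd A => f e.1)
    rw [Fintype.sum_sum_type] at hs
    simp only [hz] at hs
    ext (w | u)
    · exact hz w
    · simpa using hs

theorem flowCount_contract_eq_card (fst snd : E → V) (A : Finset V) :
    flowCount (contractFst fst snd A) (contractSnd fst snd A) univ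
      (0 : {x // x ∈ A} ⊕ Unit → K) =
    (univ.filter fun f : E → K => (∀ e, f e ≠ 0 ↔ fst e ∈ A ∨ snd e ∈ A) ∧
      ∀ v ∈ A, bdry fst snd f v = 0).card := by
  classical
  unfold flowCount
  symm
  refine Finset.card_bij' (fun f _ => fun e : contractEdges fst snd A => f e.1)
    (fun g _ => fun e => if h : fst e ∈ A ∨ snd e ∈ A then g ⟨e, h⟩ else 0) ?_ ?_ ?_ ?_
  · intro f hf
    simp only [Finset.mem_filter, Finset.mem_univ, true_and] at hf ⊢
    exact ⟨fun e => by simpa using (hf.1 e.1).2 e.2,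
      (bdry_contract_eq_zero_iff fst snd A f fun e => (hf.1 e).1).2 hf.2⟩
  · intro g hg
    simp only [Finset.mem_filter, Finset.mem_univ, true_and] at hg ⊢
    refine ⟨fun e => ?_, (bdry_contract_eq_zero_iff fst snd A _ fun e => ?_).1 ?_⟩
    · by_cases h : fst e ∈ A ∨ snd e ∈ A
      · simpa [h] using hg.1 ⟨e, h⟩
      · simp [h]
    · by_cases h : fst e ∈ A ∨ snd e ∈ A <;> simp [h]
    · rw [← hg.2]
      congr 1
      ext e
      rw [dif_pos e.2]
      rfl
  · intro f hf
    simp only [Finset.mem_filter, Finset.mem_univ, true_and] at hf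
    ext e
    by_cases h : fst e ∈ A ∨ snd e ∈ A
    · simp [h]
    · have : f e = 0 := by
        by_contra h'
        exact h ((hf.1 e).1 h')
      simp [h, this]
  · intro g _
    ext e
    dsimp only
    rw [dif_pos e.2]
    rfl

/-- Flows of the contraction, sorted by their values on the cut. -/
theorem flowCount_contract (fst snd : E → V) (A : Finset V) (L : Finset E)
    (hL : ∀ e : E, e ∈ L ↔ ¬(fst e ∈ A ↔ snd e ∈ A)) :
    flowCount (contractFst fst snd A) (contractSnd fst snd A) univ
      (0 : {x // x ∈ A} ⊕ Unit → K) =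
    ∑ x ∈ exactSupp K L,
      flowCount fst snd (innerEdges fst snd A) (cutDemand fst snd A x) := by
  classical
  have hI : ∀ e, e ∈ innerEdges fst snd A ↔ fst e ∈ A ∧ snd e ∈ A := by simp [innerEdges]
  rw [flowCount_contract_eq_card,
    Finset.card_eq_sum_card_fiberwise (f := restr L) (t := exactSupp K L)]
  · refine Finset.sum_congr rfl fun x hx => ?_
    simp only [exactSupp, Finset.mem_filter, Finset.mem_univ, true_and] at hx
    have hx0 : ∀ e, e ∉ L → x e = 0 := fun e he => by
      by_contra h; exact he ((hx e).1 h)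
    have hsum : ∀ f : E → K, (∀ e, f e ≠ 0 ↔ fst e ∈ A ∨ snd e ∈ A) → restr L f = x →
        restr (innerEdges fst snd A) f + x = f := by
      rintro f h1 rfl
      ext e
      have hf0 : fst e ∉ A → snd e ∉ A → f e = 0 := fun ha hb => by
        by_contra h
        exact ((h1 e).1 h).elim ha hb
      simp only [Pi.add_apply, restr, hI, hL]
      by_cases ha : fst e ∈ A <;> by_cases hb : snd e ∈ A <;> simp_all
    rw [flowCount, Finset.filter_filter]
    refine Finset.card_bij' (fun f _ => restr (innerEdges fst snd A) f) (fun g _ => g + x)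
      ?_ ?_ ?_ ?_
    · intro f hf
      simp only [Finset.mem_filter, Finset.mem_univ, true_and] at hf ⊢
      obtain ⟨⟨h1, h2⟩, h3⟩ := hf
      have hsum := hsum f h1 h3
      refine ⟨fun e => ?_, ?_⟩
      · have h1e := h1 e
        by_cases he : e ∈ innerEdges fst snd A
        · simp only [restr, he, if_true, iff_true]
          exact h1e.2 (Or.inl ((hI e).1 he).1)
        · simp [restr, he]
      · rw [bdry_eq_cutDemand_iff _ _ _ _ _ (fun e he => by simp [restr, he]), hsum]
        exact h2
    · intro g hg
      simp only [Finset.mem_filter, Finset.mem_univ, true_and] at hg ⊢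
      obtain ⟨h1, h2⟩ := hg
      have hg0 : ∀ e, e ∉ innerEdges fst snd A → g e = 0 := fun e he => by
        by_contra h; exact he ((h1 e).1 h)
      rw [bdry_eq_cutDemand_iff _ _ _ _ _ hg0] at h2
      refine ⟨⟨fun e => ?_, h2⟩, ?_⟩
      · have a1 := h1 e
        have a2 := hx e
        have a3 := hg0 e
        have a4 := hx0 e
        rw [hI] at a1 a3
        rw [hL] at a2 a4
        by_cases ha : fst e ∈ A <;> by_cases hb : snd e ∈ A <;> simp_all
      · ext e
        have a3 := hg0 e
        have a4 := hx0 e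
        rw [hI] at a3
        rw [hL] at a4
        simp only [restr, hL, Pi.add_apply]
        by_cases ha : fst e ∈ A <;> by_cases hb : snd e ∈ A <;> simp_all
    · intro f hf
      simp only [Finset.mem_filter, Finset.mem_univ, true_and] at hf
      exact hsum f hf.1.1 hf.2
    · intro g hg
      simp only [Finset.mem_filter, Finset.mem_univ, true_and] at hg
      ext e
      have a1 : ¬(fst e ∈ A ∧ snd e ∈ A) → g e = 0 := fun he => by
        by_contra h
        exact he ((hI e).1 ((hg.1 e).1 h))
      have a4 := hx0 e
      rw [hL] at a4
      simp only [restr, hI, Pi.add_apply]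
      by_cases ha : fst e ∈ A <;> by_cases hb : snd e ∈ A <;> simp_all
  · intro f hf
    simp only [Finset.coe_filter, Finset.mem_univ, true_and, Set.mem_ofPred_eq] at hf
    simp only [exactSupp, Finset.coe_filter, Finset.mem_univ, true_and, Set.mem_ofPred_eq]
    intro e
    have h1 := hf.1 e
    by_cases he : e ∈ L
    · simp only [restr, he, if_true, iff_true]
      rw [hL] at he
      exact h1.2 (by tauto)
    · simp [restr, he]

/-- Nowhere-zero flows of the whole graph, sorted by their values on the cut. -/
theorem flowCount_cut (fst snd : E → V) (A : Finset V) (L : Finset E)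
    (hL : ∀ e : E, e ∈ L ↔ ¬(fst e ∈ A ↔ snd e ∈ A)) :
    flowCount fst snd univ (0 : V → K) =
    ∑ x ∈ exactSupp K L,
      flowCount fst snd (innerEdges fst snd A) (cutDemand fst snd A x) *
      flowCount fst snd (innerEdges fst snd Aᶜ) (cutDemand fst snd Aᶜ x) := by
  classical
  have hI : ∀ e, e ∈ innerEdges fst snd A ↔ fst e ∈ A ∧ snd e ∈ A := by simp [innerEdges]
  have hJ : ∀ e, e ∈ innerEdges fst snd Aᶜ ↔ fst e ∉ A ∧ snd e ∉ A := by simp [innerEdges]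
  have hcases : ∀ e, (e ∈ innerEdges fst snd A ∧ e ∉ innerEdges fst snd Aᶜ ∧ e ∉ L) ∨
      (e ∉ innerEdges fst snd A ∧ e ∈ innerEdges fst snd Aᶜ ∧ e ∉ L) ∨
      (e ∉ innerEdges fst snd A ∧ e ∉ innerEdges fst snd Aᶜ ∧ e ∈ L) := by
    intro e
    rw [hI, hJ, hL]
    tauto
  -- The edges inside one side do not contribute to the boundary on the other side.
  have hlocA : ∀ h : E → K, (∀ e, e ∉ innerEdges fst snd Aᶜ → h e = 0) → ∀ v ∈ A,
      bdry fst snd h v = 0 := by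
    intro h hh v hv
    refine bdry_eq_zero_of_local _ _ _ _ fun e he => hh e ?_
    rw [hJ]
    rcases he with rfl | rfl <;> tauto
  have hlocB : ∀ g : E → K, (∀ e, e ∉ innerEdges fst snd A → g e = 0) → ∀ v ∈ Aᶜ,
      bdry fst snd g v = 0 := by
    intro h hh v hv
    rw [Finset.mem_compl] at hv
    refine bdry_eq_zero_of_local _ _ _ _ fun e he => hh e ?_
    rw [hI]
    rcases he with rfl | rfl <;> tauto
  have hzero : ∀ g h x : E → K, (∀ e, e ∉ innerEdges fst snd A → g e = 0) →
      (∀ e, e ∉ innerEdges fst snd Aᶜ → h e = 0) →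
      (bdry fst snd (g + h + x) = 0 ↔ bdry fst snd g = cutDemand fst snd A x ∧
        bdry fst snd h = cutDemand fst snd Aᶜ x) := by
    intro g h x hg hh
    rw [bdry_eq_cutDemand_iff _ _ _ _ _ hg, bdry_eq_cutDemand_iff _ _ _ _ _ hh]
    constructor
    · intro h0
      refine ⟨fun v hv => ?_, fun v hv => ?_⟩
      · have := congrFun h0 v
        simpa [hlocA h hh v hv] using this
      · have := congrFun h0 v
        simpa [hlocB g hg v hv] using this
    · rintro ⟨h1, h2⟩
      ext v
      by_cases hv : v ∈ A
      · simpa [hlocA h hh v hv] using h1 v hv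
      · rw [← Finset.mem_compl] at hv
        simpa [hlocB g hg v hv] using h2 v hv
  rw [flowCount, Finset.card_eq_sum_card_fiberwise (f := restr L) (t := exactSupp K L)]
  · refine Finset.sum_congr rfl fun x hx => ?_
    simp only [exactSupp, Finset.mem_filter, Finset.mem_univ, true_and] at hx
    have hx0 : ∀ e, e ∉ L → x e = 0 := fun e he => by
      by_contra h; exact he ((hx e).1 h)
    have hsum : ∀ f : E → K, restr L f = x →
        restr (innerEdges fst snd A) f + restr (innerEdges fst snd Aᶜ) f + x = f := by
      rintro f rfl
      ext e
      rcases hcases e with h | h | h <;> simp [restr, h]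
    rw [flowCount, flowCount, Finset.filter_filter, ← Finset.card_product]
    refine Finset.card_bij'
      (fun f _ => (restr (innerEdges fst snd A) f, restr (innerEdges fst snd Aᶜ) f))
      (fun g _ => g.1 + g.2 + x) ?_ ?_ ?_ ?_
    · intro f hf
      simp only [Finset.mem_filter, Finset.mem_univ, true_and, Finset.mem_product,
        iff_true] at hf ⊢
      obtain ⟨⟨h1, h2⟩, h3⟩ := hf
      rw [← hsum f h3, hzero _ _ _ (fun e he => by simp [restr, he])
        (fun e he => by simp [restr, he])] at h2
      refine ⟨⟨fun e => ?_, h2.1⟩, ⟨fun e => ?_, h2.2⟩⟩ <;> simp [restr, h1 e]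
    · rintro ⟨g, h⟩ hgh
      simp only [Finset.mem_filter, Finset.mem_univ, true_and, Finset.mem_product,
        iff_true] at hgh ⊢
      obtain ⟨⟨h1, h2⟩, h3, h4⟩ := hgh
      have hg0 : ∀ e, e ∉ innerEdges fst snd A → g e = 0 := fun e he => by
        by_contra h; exact he ((h1 e).1 h)
      have hh0 : ∀ e, e ∉ innerEdges fst snd Aᶜ → h e = 0 := fun e he => by
        by_contra h; exact he ((h3 e).1 h)
      refine ⟨⟨fun e => ?_, (hzero _ _ _ hg0 hh0).2 ⟨h2, h4⟩⟩, ?_⟩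
      · rcases hcases e with ⟨c1, c2, c3⟩ | ⟨c1, c2, c3⟩ | ⟨c1, c2, c3⟩
        · simpa [hh0 e c2, hx0 e c3] using (h1 e).2 c1
        · simpa [hg0 e c1, hx0 e c3] using (h3 e).2 c2
        · simpa [hg0 e c1, hh0 e c2] using (hx e).2 c3
      · ext e
        rcases hcases e with ⟨c1, c2, c3⟩ | ⟨c1, c2, c3⟩ | ⟨c1, c2, c3⟩
        · simp [restr, c3, hx0 e c3]
        · simp [restr, c3, hx0 e c3]
        · simp [restr, c3, hg0 e c1, hh0 e c2]
    · intro f hf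
      simp only [Finset.mem_filter, Finset.mem_univ, true_and] at hf
      exact hsum f hf.2
    · rintro ⟨g, h⟩ hgh
      simp only [Finset.mem_filter, Finset.mem_univ, true_and, Finset.mem_product] at hgh
      obtain ⟨⟨h1, h2⟩, h3, h4⟩ := hgh
      have hg0 : ∀ e, e ∉ innerEdges fst snd A → g e = 0 := fun e he => by
        by_contra h; exact he ((h1 e).1 h)
      have hh0 : ∀ e, e ∉ innerEdges fst snd Aᶜ → h e = 0 := fun e he => by
        by_contra h; exact he ((h3 e).1 h)
      ext e
      · rcases hcases e with ⟨c1, c2, c3⟩ | ⟨c1, c2, c3⟩ | ⟨c1, c2, c3⟩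
        · simp [restr, c1, hh0 e c2, hx0 e c3]
        · simp [restr, c1, hg0 e c1]
        · simp [restr, c1, hg0 e c1]
      · rcases hcases e with ⟨c1, c2, c3⟩ | ⟨c1, c2, c3⟩ | ⟨c1, c2, c3⟩
        · simp [restr, c2, hh0 e c2]
        · simp [restr, c2, hg0 e c1, hx0 e c3]
        · simp [restr, c2, hh0 e c2]
  · intro f hf
    simp only [Finset.coe_filter, Finset.mem_univ, true_and, Set.mem_ofPred_eq, iff_true] at hf
    simp only [exactSupp, Finset.coe_filter, Finset.mem_univ, true_and, Set.mem_ofPred_eq]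
    intro e
    simp [restr, hf.1 e]

/-! ### Balanced values on a three-edge cut -/

/-- The net amount that `x` carries into `A`. -/
def cutSum (fst snd : E → V) (A : Finset V) (x : E → K) : K := ∑ v ∈ A, bdry fst snd x v

theorem cutSum_compl (fst snd : E → V) (A : Finset V) (x : E → K) :
    cutSum fst snd Aᶜ x = 0 ↔ cutSum fst snd A x = 0 := by
  have h : cutSum fst snd A x + cutSum fst snd Aᶜ x = 0 := by
    rw [cutSum, cutSum, Finset.sum_add_sum_compl, sum_bdry_univ]
  constructor
  · intro h'; rwa [h', add_zero] at h
  · intro h'; rwa [h', zero_add] at h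

/-- The sign of a cut edge: `1` if it points into `A`, else `-1`. -/
def cutSign (snd : E → V) (A : Finset V) (e : E) : K := if snd e ∈ A then 1 else -1

/-- The endpoint in `A` of a cut edge. -/
def cutEnd (fst snd : E → V) (A : Finset V) (e : E) : V := if snd e ∈ A then snd e else fst e

theorem cutSign_mul_self (snd : E → V) (A : Finset V) (e : E) :
    (cutSign snd A e : K) * cutSign snd A e = 1 := by
  unfold cutSign; split_ifs <;> simp

/-- Pairing a potential with the boundary of a function on the cut edges. -/
theorem sum_mul_bdry_cut (fst snd : E → V) (A : Finset V) (L : Finset E)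
    (hL : ∀ e : E, e ∈ L ↔ ¬(fst e ∈ A ↔ snd e ∈ A)) (x : E → K) (hx : x ∈ exactSupp K L)
    (φ : V → K) :
    ∑ v ∈ A, φ v * bdry fst snd x v =
      ∑ e ∈ L, cutSign snd A e * x e * φ (cutEnd fst snd A e) := by
  simp only [exactSupp, Finset.mem_filter, Finset.mem_univ, true_and] at hx
  have h := sum_mul_bdry fst snd x (fun v => if v ∈ A then φ v else 0)
  simp only [ite_mul, zero_mul, Finset.sum_ite_mem, Finset.univ_inter] at h
  rw [h, ← Finset.sum_subset (Finset.subset_univ L)]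
  · refine Finset.sum_congr rfl fun e he => ?_
    rw [hL] at he
    unfold cutSign cutEnd
    by_cases h1 : snd e ∈ A
    · have h2 : fst e ∉ A := by tauto
      simp [h1, h2]
    · have h2 : fst e ∈ A := by tauto
      simp [h1, h2]
  · intro e _ he
    have : x e = 0 := by
      by_contra h'; exact he ((hx e).1 h')
    simp [this]

theorem cutSum_eq (fst snd : E → V) (A : Finset V) (L : Finset E)
    (hL : ∀ e : E, e ∈ L ↔ ¬(fst e ∈ A ↔ snd e ∈ A)) (x : E → K) (hx : x ∈ exactSupp K L) :
    cutSum fst snd A x = ∑ e ∈ L, cutSign snd A e * x e := by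
  simpa [cutSum] using sum_mul_bdry_cut fst snd A L hL x hx (fun _ => 1)

theorem flowCount_eq_zero (fst snd : E → V) (A : Finset V) (x : E → K)
    (hs : cutSum fst snd A x ≠ 0) :
    flowCount fst snd (innerEdges fst snd A) (cutDemand fst snd A x) = 0 := by
  rw [flowCount, Finset.card_eq_zero]
  refine Finset.filter_false_of_mem fun g _ hg => hs ?_
  obtain ⟨h1, h2⟩ := hg
  have h3 := sum_mul_bdry fst snd g (fun v => if v ∈ A then 1 else 0)
  simp only [ite_mul, zero_mul, one_mul, Finset.sum_ite_mem, Finset.univ_inter, h2] at h3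
  have h4 : ∑ v ∈ A, cutDemand fst snd A x v = -cutSum fst snd A x := by
    rw [cutSum, ← Finset.sum_neg_distrib]
    exact Finset.sum_congr rfl fun v hv => by simp [cutDemand, hv]
  rw [h4] at h3
  rw [← neg_eq_zero, h3]
  refine Finset.sum_eq_zero fun e _ => ?_
  by_cases he : e ∈ innerEdges fst snd A
  · simp only [innerEdges, Finset.mem_filter, Finset.mem_univ, true_and] at he
    simp [he]
  · have : g e = 0 := by
      by_contra h'; exact he ((h1 e).1 h')
    simp [this]

/-- Three nonzero values with sum zero have no proper nonempty subset with sum zero, so a balanced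
nowhere-zero demand at the three ends of the cut is met within `S` exactly when `S` connects all
three ends. This condition does not mention the values. -/
theorem cutDemand_orthogonal_iff (fst snd : E → V) (A : Finset V) (e₁ e₂ e₃ : E)
    (h12 : e₁ ≠ e₂) (h13 : e₁ ≠ e₃) (h23 : e₂ ≠ e₃)
    (hL : ∀ e : E, e ∈ ({e₁, e₂, e₃} : Finset E) ↔ ¬(fst e ∈ A ↔ snd e ∈ A)) (x : E → K)
    (hx : x ∈ exactSupp K {e₁, e₂, e₃}) (hs : cutSum fst snd A x = 0) (S : Finset E) :
    (∀ φ : V → K, (∀ e ∈ S, φ (fst e) = φ (snd e)) →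
      ∑ v, φ v * cutDemand fst snd A x v = 0) ↔
    (∀ φ : V → K, (∀ e ∈ S, φ (fst e) = φ (snd e)) →
      φ (cutEnd fst snd A e₂) = φ (cutEnd fst snd A e₁) ∧
      φ (cutEnd fst snd A e₃) = φ (cutEnd fst snd A e₁)) := by
  have hsum : ∀ a : E → K, ∑ e ∈ ({e₁, e₂, e₃} : Finset E), a e = a e₁ + a e₂ + a e₃ := by
    intro a
    rw [Finset.sum_insert (by simp [h12, h13]), Finset.sum_pair h23, add_assoc]
  have hpair : ∀ φ : V → K, ∑ v, φ v * cutDemand fst snd A x v =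
      -(cutSign snd A e₁ * x e₁ * φ (cutEnd fst snd A e₁) +
        cutSign snd A e₂ * x e₂ * φ (cutEnd fst snd A e₂) +
        cutSign snd A e₃ * x e₃ * φ (cutEnd fst snd A e₃)) := by
    intro φ
    rw [← hsum (fun e => cutSign snd A e * x e * φ (cutEnd fst snd A e)),
      ← sum_mul_bdry_cut fst snd A _ hL x hx]
    simp [cutDemand]
  rw [cutSum_eq fst snd A _ hL x hx, hsum] at hs
  simp only [exactSupp, Finset.mem_filter, Finset.mem_univ, true_and] at hx
  have hne : ∀ e ∈ ({e₁, e₂, e₃} : Finset E), cutSign snd A e * x e ≠ 0 := by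
    intro e he
    refine mul_ne_zero ?_ ((hx e).2 he)
    unfold cutSign; split_ifs <;> simp
  have n1 := hne e₁ (by simp)
  have n2 := hne e₂ (by simp)
  have n3 := hne e₃ (by simp)
  simp only [hpair, neg_eq_zero]
  generalize cutSign snd A e₁ * x e₁ = a₁ at *
  generalize cutSign snd A e₂ * x e₂ = a₂ at *
  generalize cutSign snd A e₃ * x e₃ = a₃ at *
  refine ⟨fun h φ hφ => ?_, fun h φ hφ => ?_⟩
  -- Test against the indicator function of a level set of `φ`.
  · have h0 := h (fun v => if φ v = φ (cutEnd fst snd A e₁) then 1 else 0)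
      (fun e he => by simp only [hφ e he])
    by_cases c2 : φ (cutEnd fst snd A e₂) = φ (cutEnd fst snd A e₁) <;>
    by_cases c3 : φ (cutEnd fst snd A e₃) = φ (cutEnd fst snd A e₁) <;>
    simp only [c2, c3, if_true, if_false, mul_one, mul_zero, add_zero] at h0
    · exact ⟨c2, c3⟩
    · exact absurd (by linear_combination hs - h0) n3
    · exact absurd (by linear_combination hs - h0) n2
    · exact absurd h0 n1
  · obtain ⟨c2, c3⟩ := h φ hφ
    rw [c2, c3]
    linear_combination φ (cutEnd fst snd A e₁) * hs

/-- The number of ways to extend cut values into one side is the same for all balanced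
nowhere-zero cut values. -/
theorem exists_flowCount_const (fst snd : E → V) (A : Finset V) (L : Finset E)
    (hL : ∀ e : E, e ∈ L ↔ ¬(fst e ∈ A ↔ snd e ∈ A)) (hcard : L.card = 3) :
    ∃ m : ℕ, ∀ x ∈ exactSupp K L,
      flowCount fst snd (innerEdges fst snd A) (cutDemand fst snd A x) =
        if cutSum fst snd A x = 0 then m else 0 := by
  obtain ⟨e₁, e₂, e₃, h12, h13, h23, rfl⟩ := Finset.card_eq_three.1 hcard
  by_cases hy : ∃ y ∈ exactSupp K ({e₁, e₂, e₃} : Finset E), cutSum fst snd A y = 0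
  · obtain ⟨y, hy, hys⟩ := hy
    refine ⟨flowCount fst snd (innerEdges fst snd A) (cutDemand fst snd A y), fun x hx => ?_⟩
    split_ifs with hs
    · refine flowCount_congr _ _ _ _ _ fun S => ?_
      rw [cutDemand_orthogonal_iff fst snd A e₁ e₂ e₃ h12 h13 h23 hL x hx hs,
        cutDemand_orthogonal_iff fst snd A e₁ e₂ e₃ h12 h13 h23 hL y hy hys]
    · exact flowCount_eq_zero _ _ _ _ hs
  · push Not at hy
    refine ⟨0, fun x hx => ?_⟩
    rw [ite_self]
    exact flowCount_eq_zero _ _ _ _ (hy x hx)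

/-- A three-edge cut carries `(q - 1)(q - 2)` balanced nowhere-zero assignments: two values
`a ≠ 0` and `b ∉ {0, -a}` can be chosen, and the third value is then determined. -/
theorem card_balanced (fst snd : E → V) (A : Finset V) (L : Finset E)
    (hL : ∀ e : E, e ∈ L ↔ ¬(fst e ∈ A ↔ snd e ∈ A)) (hcard : L.card = 3) :
    ((exactSupp K L).filter fun x => cutSum fst snd A x = 0).card =
      (Fintype.card K - 1) * (Fintype.card K - 1 - 1) := by
  classical
  obtain ⟨e₁, e₂, e₃, h12, h13, h23, rfl⟩ := Finset.card_eq_three.1 hcard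
  have hsum : ∀ a : E → K, ∑ e ∈ ({e₁, e₂, e₃} : Finset E), a e = a e₁ + a e₂ + a e₃ := by
    intro a
    rw [Finset.sum_insert (by simp [h12, h13]), Finset.sum_pair h23, add_assoc]
  have hP : ((univ.erase (0 : K)).sigma fun a => (univ.erase (0 : K)).erase (-a)).card =
      (Fintype.card K - 1) * (Fintype.card K - 1 - 1) := by
    rw [Finset.card_sigma, Finset.sum_const_nat (m := Fintype.card K - 1 - 1)]
    · simp
    · intro a ha
      have ha : a ≠ 0 := by simpa using ha
      rw [Finset.card_erase_of_mem (by simp [ha]), Finset.card_erase_of_mem (by simp),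
        Finset.card_univ]
  rw [← hP]
  have s1 := cutSign_mul_self (K := K) snd A e₁
  have s2 := cutSign_mul_self (K := K) snd A e₂
  have s3 := cutSign_mul_self (K := K) snd A e₃
  have hsne : ∀ e, (cutSign snd A e : K) ≠ 0 := by
    intro e; unfold cutSign; split_ifs <;> simp
  refine Finset.card_bij' (fun x _ => ⟨cutSign snd A e₁ * x e₁, cutSign snd A e₂ * x e₂⟩)
    (fun p _ => fun e => if e = e₁ then cutSign snd A e₁ * p.1 else
      if e = e₂ then cutSign snd A e₂ * p.2 else
      if e = e₃ then -(cutSign snd A e₃ * (p.1 + p.2)) else 0) ?_ ?_ ?_ ?_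
  · intro x hx
    rw [Finset.mem_filter] at hx
    obtain ⟨hx, hs⟩ := hx
    rw [cutSum_eq fst snd A _ hL x hx, hsum] at hs
    simp only [exactSupp, Finset.mem_filter, Finset.mem_univ, true_and] at hx
    have x1 := (hx e₁).2 (by simp)
    have x2 := (hx e₂).2 (by simp)
    have x3 := (hx e₃).2 (by simp)
    simp only [Finset.mem_sigma, Finset.mem_erase, Finset.mem_univ, and_true]
    refine ⟨mul_ne_zero (hsne _) x1, fun h => mul_ne_zero (hsne e₃) x3 ?_,
      mul_ne_zero (hsne _) x2⟩
    linear_combination hs - h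
  · rintro ⟨a, b⟩ hab
    simp only [Finset.mem_sigma, Finset.mem_erase, Finset.mem_univ, and_true] at hab
    obtain ⟨ha, hb, hb0⟩ := hab
    have hab : a + b ≠ 0 := fun h => hb (by linear_combination h)
    rw [Finset.mem_filter]
    refine (and_iff_left_of_imp fun hx => ?_).2 ?_
    · rw [cutSum_eq fst snd A _ hL _ hx, hsum]
      simp only [h12.symm, h13.symm, h23.symm, if_true, if_false]
      linear_combination a * s1 + b * s2 - (a + b) * s3
    · simp only [exactSupp, Finset.mem_filter, Finset.mem_univ, true_and]
      intro e
      by_cases c1 : e = e₁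
      · simp [c1, hsne, ha]
      by_cases c2 : e = e₂
      · simp [c2, h12.symm, hsne, hb0]
      by_cases c3 : e = e₃
      · simpa [c3, h13.symm, h23.symm, hsne] using fun h => hab (by linear_combination h)
      · simp [c1, c2, c3]
  · intro x hx
    rw [Finset.mem_filter] at hx
    obtain ⟨hx, hs⟩ := hx
    rw [cutSum_eq fst snd A _ hL x hx, hsum] at hs
    simp only [exactSupp, Finset.mem_filter, Finset.mem_univ, true_and] at hx
    ext e
    by_cases c1 : e = e₁
    · subst c1
      simp only [if_true]
      linear_combination x e * s1
    by_cases c2 : e = e₂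
    · subst c2
      simp only [c1, if_true, if_false]
      linear_combination x e * s2
    by_cases c3 : e = e₃
    · subst c3
      simp only [c1, c2, if_true, if_false]
      linear_combination x e * s3 - cutSign snd A e * hs
    · simp only [c1, c2, c3, if_false]
      by_contra h
      have := (hx e).1 (Ne.symm h)
      simp [c1, c2, c3] at this
  · rintro ⟨a, b⟩ hab
    simp only [if_true, h12.symm, if_false]
    ext
    · linear_combination a * s1
    · simpa using (by linear_combination b * s2 :
        (cutSign snd A e₂ : K) * (cutSign snd A e₂ * b) = b)

/-! ### The identity over a finite field -/

theorem eval_identity (K : Type) [Field K] [Fintype K] [DecidableEq K]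
    (fst snd : E → V) (A : Finset V) (L : Finset E)
    (hL : ∀ e : E, e ∈ L ↔ ¬(fst e ∈ A ↔ snd e ∈ A)) (hcard : L.card = 3) :
    (flowPoly fst snd * (X - C 1) * (X - C 2)).eval (Fintype.card K : ℤ) =
      (flowPoly (contractFst fst snd A) (contractSnd fst snd A) *
        flowPoly (contractFst fst snd Aᶜ) (contractSnd fst snd Aᶜ)).eval
          (Fintype.card K : ℤ) := by
  have hLc : ∀ e : E, e ∈ L ↔ ¬(fst e ∈ Aᶜ ↔ snd e ∈ Aᶜ) := by
    intro e
    rw [hL, Finset.mem_compl, Finset.mem_compl]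
    tauto
  obtain ⟨m, hm⟩ := exists_flowCount_const (K := K) fst snd A L hL hcard
  obtain ⟨n, hn⟩ := exists_flowCount_const (K := K) fst snd Aᶜ L hLc hcard
  simp only [cutSum_compl] at hn
  have hX := card_balanced (K := K) fst snd A L hL hcard
  have h0 : flowCount fst snd univ (0 : V → K) =
      (Fintype.card K - 1) * (Fintype.card K - 1 - 1) * (m * n) := by
    rw [flowCount_cut fst snd A L hL, ← hX, ← smul_eq_mul, ← Finset.sum_const,
      Finset.sum_filter]
    refine Finset.sum_congr rfl fun x hx => ?_
    rw [hm x hx, hn x hx]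
    split_ifs <;> simp
  have h1 : flowCount (contractFst fst snd A) (contractSnd fst snd A) univ
      (0 : {x // x ∈ A} ⊕ Unit → K) =
      (Fintype.card K - 1) * (Fintype.card K - 1 - 1) * m := by
    rw [flowCount_contract fst snd A L hL, ← hX, ← smul_eq_mul, ← Finset.sum_const,
      Finset.sum_filter]
    exact Finset.sum_congr rfl hm
  have h2 : flowCount (contractFst fst snd Aᶜ) (contractSnd fst snd Aᶜ) univ
      (0 : {x // x ∈ Aᶜ} ⊕ Unit → K) =
      (Fintype.card K - 1) * (Fintype.card K - 1 - 1) * n := by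
    rw [flowCount_contract fst snd Aᶜ L hLc, ← hX, ← smul_eq_mul, ← Finset.sum_const,
      Finset.sum_filter]
    exact Finset.sum_congr rfl hn
  have hq : 1 < Fintype.card K := Fintype.one_lt_card
  obtain ⟨k, hk⟩ : ∃ k, Fintype.card K = k + 2 := ⟨Fintype.card K - 2, by omega⟩
  simp only [Polynomial.eval_mul, Polynomial.eval_sub, Polynomial.eval_X, Polynomial.eval_C]
  rw [eval_flowPoly, eval_flowPoly, eval_flowPoly, h0, h1, h2, hk]
  simp only [show k + 2 - 1 = k + 1 from rfl, show k + 1 - 1 = k from rfl]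
  push_cast
  ring

end Flows

/-- Let `G` be a connected multigraph with a minimal 3-edge-cutset `L`
separating `G` into parts `G'` (induced on `A`) and `G''` (induced on the complement of
`A`): `L` consists precisely of the edges crossing between `A` and its complement,
`|L| = 3`, and both sides are connected (which is equivalent to minimality of the
cutset).  Let `G₁ = G/G''` and `G₂ = G/G'` be the graphs obtained by contracting each
side of the cutset to a single vertex.  Then the flow polynomials satisfy
`F(G;λ)⬝(λ-1)⬝(λ-2) = F(G₁;λ)⬝F(G₂;λ)`. -/
theorem stmt9 {V E : Type} [Fintype V] [DecidableEq V] [Fintype E] [DecidableEq E]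
    (fst snd : E → V) (hconn : mgConnected fst snd)
    (A : Finset V) (hA : A.Nonempty) (hAc : Aᶜ.Nonempty)
    (L : Finset E) (hL : ∀ e : E, e ∈ L ↔ ¬(fst e ∈ A ↔ snd e ∈ A))
    (hcard : L.card = 3)
    (hside1 : sideConnected fst snd A) (hside2 : sideConnected fst snd Aᶜ) :
    flowPoly fst snd * (X - C 1) * (X - C 2) =
      flowPoly (contractFst fst snd A) (contractSnd fst snd A) *
        flowPoly (contractFst fst snd Aᶜ) (contractSnd fst snd Aᶜ) := by
  -- Compare values at the primes, the orders of the fields `ZMod p`.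
  refine Polynomial.eq_of_infinite_eval_eq _ _
    ((Nat.infinite_setOfPred_prime.image (Nat.cast_injective (R := ℤ)).injOn).mono ?_)
  rintro _ ⟨p, hp, rfl⟩
  have : Fact p.Prime := ⟨hp⟩
  simpa only [Set.mem_ofPred_eq, ZMod.card] using eval_identity (ZMod p) fst snd A L hL hcard
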